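/- arXiv:1601.04794 — 3 statements merged into one kernel-verified Lean document; each statement's English description precedes it below -/
import Mathlib

section
/- Let X be a real-valued random variable on a probability space (Ω, 𝓕, P) with E[X] = 0, and let δ > 0 be such that E[e^{δ|X|}] < ∞. Then for every real t with |t| ≤ δ, one has E[e^{tX}] ≤ 1 + (t/δ)² · E[e^{δ|X|}], and consequently E[e^{tX}] ≤ exp((t/δ)² · E[e^{δ|X|}]). -/
open MeasureTheory Real

lemma aux_hasSum_exp (x : ℝ) : HasSum (fun n : ℕ => x ^ n / (n.factorial : ℝ)) (Real.exp x) := by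
  rw [Real.exp_eq_exp_ℝ]
  exact NormedSpace.expSeries_div_hasSum_exp x

lemma aux_pointwise (s y : ℝ) (hs : |s| ≤ 1) :
    Real.exp (s * y) ≤ 1 + s * y + s ^ 2 * Real.exp |y| := by
  have h1 := ((hasSum_ite_eq (0 : ℕ) (1 : ℝ)).add (hasSum_ite_eq (1 : ℕ) (s * y))).add
    ((aux_hasSum_exp |y|).mul_left (s ^ 2))
  refine hasSum_le ?_ (aux_hasSum_exp (s * y)) h1
  intro n
  match n with
  | 0 => simp; positivity
  | 1 => simp; positivity
  | n + 2 =>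
    have h2 : (s * y) ^ (n + 2) ≤ s ^ 2 * |y| ^ (n + 2) := by
      calc (s * y) ^ (n + 2) ≤ |(s * y) ^ (n + 2)| := le_abs_self _
        _ = |s| ^ n * (s ^ 2 * |y| ^ (n + 2)) := by
          rw [abs_pow, abs_mul, mul_pow, pow_add |s|, sq_abs]; ring
        _ ≤ 1 * (s ^ 2 * |y| ^ (n + 2)) := by
          gcongr
          exact pow_le_one₀ (abs_nonneg s) hs
        _ = _ := one_mul _
    simp only [Nat.add_eq_zero_iff, OfNat.ofNat_ne_zero, and_false, if_false,
      show ¬ (n + 2 = 1) by omega, zero_add]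
    rw [← mul_div_assoc]
    gcongr

/-- **Lemma (Liu/Watanabe)**: if `E[X] = 0` and `E[exp (δ|X|)] < ∞` for some `δ > 0`,
then for every `t` with `|t| ≤ δ`,
`E[exp (t X)] ≤ 1 + (t/δ)² E[exp (δ|X|)] ≤ exp ((t/δ)² E[exp (δ|X|)])`. -/
theorem stmt_0 {Ω : Type*} [MeasurableSpace Ω] (μ : Measure Ω) [IsProbabilityMeasure μ]
    (X : Ω → ℝ) (hX : Measurable X)
    (hXint : Integrable X μ) (hmean : ∫ ω, X ω ∂μ = 0)
    (δ : ℝ) (hδ : 0 < δ)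
    (hexp : Integrable (fun ω => Real.exp (δ * |X ω|)) μ)
    (t : ℝ) (ht : |t| ≤ δ) :
    (∫ ω, Real.exp (t * X ω) ∂μ)
        ≤ 1 + (t / δ) ^ 2 * ∫ ω, Real.exp (δ * |X ω|) ∂μ ∧
    (∫ ω, Real.exp (t * X ω) ∂μ)
        ≤ Real.exp ((t / δ) ^ 2 * ∫ ω, Real.exp (δ * |X ω|) ∂μ) := by
  have key : (∫ ω, Real.exp (t * X ω) ∂μ)
        ≤ 1 + (t / δ) ^ 2 * ∫ ω, Real.exp (δ * |X ω|) ∂μ := by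
    have hpt : ∀ ω, Real.exp (t * X ω) ≤
        1 + t * X ω + (t / δ) ^ 2 * Real.exp (δ * |X ω|) := by
      intro ω
      have h := aux_pointwise (t / δ) (δ * X ω)
        (by rw [abs_div, abs_of_pos hδ]; exact (div_le_one hδ).2 ht)
      rwa [abs_mul, abs_of_pos hδ, ← mul_assoc, div_mul_cancel₀ _ hδ.ne'] at h
    have i1 : Integrable (fun ω => 1 + t * X ω) μ :=
      (integrable_const (1 : ℝ)).add (hXint.const_mul t)
    have i2 : Integrable (fun ω => (t / δ) ^ 2 * Real.exp (δ * |X ω|)) μ := hexp.const_mul _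
    have i0 : Integrable (fun ω => Real.exp (t * X ω)) μ := by
      refine hexp.mono' (by fun_prop) (Filter.Eventually.of_forall fun ω => ?_)
      rw [Real.norm_eq_abs, Real.abs_exp, Real.exp_le_exp]
      calc t * X ω ≤ |t * X ω| := le_abs_self _
        _ = |t| * |X ω| := abs_mul _ _
        _ ≤ δ * |X ω| := by gcongr
    calc (∫ ω, Real.exp (t * X ω) ∂μ)
        ≤ ∫ ω, (1 + t * X ω + (t / δ) ^ 2 * Real.exp (δ * |X ω|)) ∂μ :=
          integral_mono i0 (i1.add i2) hpt
      _ = _ := by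
        rw [integral_add i1 i2, integral_add (integrable_const (1 : ℝ)) (hXint.const_mul t),
          integral_const_mul, integral_const_mul, hmean]
        simp
  refine ⟨key, key.trans ?_⟩
  rw [add_comm]
  exact Real.add_one_le_exp _
end

section
/- Fix indices i < l ≤ M and constants L ≥ 0, N > 0. Suppose there is a Borel measurable function f : ℝ^i → ℝ such that E[X_l | 𝓕_i] = f(X_1, …, X_i) almost surely, and such that for all (x_1, …, x_i) ∈ ℝ^i, |f(x_1, …, x_{i−1}, x_i) − f(x_1, …, x_{i−1}, 0)| ≤ L·|x_i|/N. Then almost surely |E[X_l | 𝓕_i] − E[X_l | 𝓕_{i−1}]| ≤ L·|X_i|/N + L·E[|X_i| | 𝓕_{i−1}]/N. -/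
open MeasureTheory

/-- `natFiltration X j` is the σ-algebra generated by `X 1, …, X j`
(the trivial σ-algebra for `j = 0`). -/
noncomputable def natFiltration {Ω : Type*} (X : ℕ → Ω → ℝ) (j : ℕ) :
    MeasurableSpace Ω :=
  ⨆ k : Fin j, MeasurableSpace.comap (X (↑k + 1)) inferInstance

/-- If `E[X_l | 𝓕_i] = f (X_1, …, X_i)` a.s. for a measurable `f` whose dependence on the
last coordinate is `(L/N)`-Lipschitz at `0`, then a.s.
`|E[X_l | 𝓕_i] − E[X_l | 𝓕_{i−1}]| ≤ L|X_i|/N + L·E[|X_i| | 𝓕_{i−1}]/N`. -/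
theorem stmt_1 {Ω : Type*} [MeasurableSpace Ω] (μ : Measure Ω) [IsProbabilityMeasure μ]
    (M : ℕ) (X : ℕ → Ω → ℝ)
    (hmeas : ∀ i, Measurable (X i)) (hint : ∀ i, Integrable (X i) μ)
    (L N : ℝ) (hL : 0 ≤ L) (hN : 0 < N)
    (i l : ℕ) (hi : 1 ≤ i) (hil : i < l) (hlM : l ≤ M)
    (f : (Fin i → ℝ) → ℝ) (hfmeas : Measurable f)
    (hf : μ[X l | natFiltration X i] =ᵐ[μ] fun ω => f fun k => X (↑k + 1) ω)
    (hLip : ∀ x : Fin i → ℝ,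
      |f x - f (Function.update x ⟨i - 1, by omega⟩ 0)| ≤ L * |x ⟨i - 1, by omega⟩| / N) :
    ∀ᵐ ω ∂μ,
      |(μ[X l | natFiltration X i]) ω - (μ[X l | natFiltration X (i - 1)]) ω|
        ≤ L * |X i ω| / N
          + L * (μ[fun ω' => |X i ω'| | natFiltration X (i - 1)]) ω / N := by
  obtain ⟨j, rfl⟩ : ∃ j, i = j + 1 := ⟨i - 1, by omega⟩
  simp only [Nat.add_sub_cancel] at hLip ⊢
  have hle : ∀ n, natFiltration X n ≤ ‹MeasurableSpace Ω› := fun n =>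
    iSup_le fun k => (hmeas _).comap_le
  have hmX : ∀ n k, k < n → Measurable[natFiltration X n] (X (k + 1)) := fun n k hk =>
    Measurable.mono (comap_measurable (X (k + 1)))
      (le_iSup (fun k : Fin n => MeasurableSpace.comap (X (↑k + 1)) inferInstance) ⟨k, hk⟩) le_rfl
  have hmono : natFiltration X j ≤ natFiltration X (j + 1) :=
    iSup_le fun k => (hmX (j + 1) k (by omega)).comap_le
  set g : Ω → ℝ := fun ω =>
    f (Function.update (fun k : Fin (j + 1) => X (↑k + 1) ω) ⟨j, by omega⟩ 0) with hg
  have hgm : Measurable[natFiltration X j] g := by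
    refine hfmeas.comp ?_
    refine @measurable_pi_lambda _ _ _ (natFiltration X j) _ _ fun k => ?_
    by_cases hk : k = ⟨j, by omega⟩
    · subst hk
      simp only [Function.update_self]
      exact measurable_const
    · simp only [Function.update_of_ne hk]
      refine hmX j k ?_
      have : (k : ℕ) ≠ j := fun h => hk (Fin.ext h)
      omega
  set Y := μ[X l | natFiltration X (j + 1)] with hY
  have hYint : Integrable Y μ := integrable_condExp
  have hbound : ∀ᵐ ω ∂μ, |Y ω - g ω| ≤ L / N * |X (j + 1) ω| := by
    filter_upwards [hf] with ω hω
    rw [hω]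
    have := hLip (fun k => X (↑k + 1) ω)
    rw [div_mul_eq_mul_div]
    exact this
  have hXint : Integrable (fun ω => |X (j + 1) ω|) μ := (hint (j + 1)).abs
  have hcX : Integrable (fun ω => L / N * |X (j + 1) ω|) μ := hXint.const_mul _
  have hDint : Integrable (Y - g) μ := by
    refine hcX.mono' (hYint.aestronglyMeasurable.sub
      (hgm.mono (hle j) le_rfl).aestronglyMeasurable) ?_
    filter_upwards [hbound] with ω h
    simpa using h
  have hgint : Integrable g μ := by
    have := hYint.sub hDint
    simpa using this
  have h1 : μ[Y | natFiltration X j] =ᵐ[μ] μ[X l | natFiltration X j] :=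
    condExp_condExp_of_le hmono (hle _)
  have h2 : μ[Y - g | natFiltration X j] =ᵐ[μ]
      μ[Y | natFiltration X j] - μ[g | natFiltration X j] := condExp_sub hYint hgint _
  have h3 : μ[g | natFiltration X j] = g :=
    condExp_of_stronglyMeasurable (hle j) hgm.stronglyMeasurable hgint
  have h4 : μ[fun ω => L / N * |X (j + 1) ω| | natFiltration X j] =ᵐ[μ]
      fun ω => L / N * (μ[fun ω' => |X (j + 1) ω'| | natFiltration X j]) ω :=
    condExp_smul (L / N) (fun ω' => |X (j + 1) ω'|) (natFiltration X j)
  have h5 : μ[Y - g | natFiltration X j] ≤ᵐ[μ]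
      μ[fun ω => L / N * |X (j + 1) ω| | natFiltration X j] := by
    refine condExp_mono hDint hcX ?_
    filter_upwards [hbound] with ω h
    exact (abs_le.1 h).2
  have h6 : μ[-(Y - g) | natFiltration X j] ≤ᵐ[μ]
      μ[fun ω => L / N * |X (j + 1) ω| | natFiltration X j] := by
    refine condExp_mono hDint.neg hcX ?_
    filter_upwards [hbound] with ω h
    have := (abs_le.1 h).1
    simp only [Pi.neg_apply, Pi.sub_apply]
    linarith
  have h7 := condExp_neg (μ := μ) (Y - g) (natFiltration X j)
  filter_upwards [hbound, h1, h2, h4, h5, h6, h7] with ω hb e1 e2 e4 e5 e6 e7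
  rw [h3] at e2
  simp only [Pi.sub_apply, Pi.neg_apply] at e2 e7
  rw [e7] at e6
  rw [e4] at e5 e6
  rw [e2, e1] at e5 e6
  rw [mul_div_right_comm, mul_div_right_comm]
  obtain ⟨b1, b2⟩ := abs_le.1 hb
  rw [abs_le]
  constructor <;> linarith
end

section
/- Let K ≥ 2 be an integer, let D ⊆ ℝ² be open, and let u : D → ℝ be differentiable with 0 < u(x, z) < 1/2 and 1 − u(x, z) − x/2 > 0 for all (x, z) ∈ D. Suppose u satisfies the implicit equation z = (2(1 − u^K)/(K·u^{K−1})) · ln((1 − u − x/2)/(1 − 2u)) at every point of D. Then u solves the K-SAT partial differential equation (1 − x/2 − u) · (K·u^{K−1}/(1 − u^K)) · ∂u/∂x − ∂u/∂z = 0 on D; moreover, at any point of D with z = 0 one has u(x, 0) = x/2. -/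
/-- If a differentiable function `u(x, z)` on an open set `D ⊆ ℝ²`, with
`0 < u < 1/2` and `1 − u − x/2 > 0` on `D`, satisfies the implicit equation
`z = (2(1 − u^K)/(K u^{K−1})) ln((1 − u − x/2)/(1 − 2u))` on `D`, then it solves the
K-SAT PDE `(1 − x/2 − u)·(K u^{K−1}/(1 − u^K))·∂u/∂x − ∂u/∂z = 0` on `D`, and
`u(x, 0) = x/2` at every point of `D` with `z = 0`.  Here `∂u/∂x` and `∂u/∂z` are the
directional derivatives `fderiv ℝ u p (1, 0)` and `fderiv ℝ u p (0, 1)`. -/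
theorem stmt_16 (K : ℕ) (hK : 2 ≤ K) (D : Set (ℝ × ℝ)) (hD : IsOpen D)
    (u : ℝ × ℝ → ℝ) (hdiff : ∀ p ∈ D, DifferentiableAt ℝ u p)
    (hu0 : ∀ p ∈ D, 0 < u p) (huhalf : ∀ p ∈ D, u p < 1 / 2)
    (hux : ∀ p ∈ D, 0 < 1 - u p - p.1 / 2)
    (heq : ∀ p ∈ D,
      p.2 = (2 * (1 - u p ^ K) / (K * u p ^ (K - 1))) *
        Real.log ((1 - u p - p.1 / 2) / (1 - 2 * u p))) :
    (∀ p ∈ D,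
      (1 - p.1 / 2 - u p) * (K * u p ^ (K - 1) / (1 - u p ^ K)) * fderiv ℝ u p (1, 0)
        - fderiv ℝ u p (0, 1) = 0) ∧
    ∀ p ∈ D, p.2 = 0 → u p = p.1 / 2 := by
  have hpow : ∀ p ∈ D, 0 < 1 - u p ^ K := by
    intro p hp
    have := pow_lt_one₀ (hu0 p hp).le (by linarith [huhalf p hp] : u p < 1)
      (by omega : K ≠ 0)
    linarith
  have hKpos : (0 : ℝ) < K := by
    have : 0 < K := by omega
    exact_mod_cast this
  refine ⟨?_, ?_⟩
  · intro p hp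
    have h0 := hu0 p hp
    have h1 := huhalf p hp
    have hw := hux p hp
    have hP := hpow p hp
    have hQ : 0 < (K : ℝ) * u p ^ (K - 1) := by positivity
    have hy : 0 < 1 - 2 * u p := by linarith
    have hu := (hdiff p hp).hasFDerivAt
    have hA : DifferentiableAt ℝ
        (fun t : ℝ => 2 * (1 - t ^ K) / (K * t ^ (K - 1))) (u p) := by
      apply DifferentiableAt.div
      · fun_prop
      · fun_prop
      · exact hQ.ne'
    have hAu := hA.hasDerivAt.comp_hasFDerivAt p hu
    have hL1 := (((hasFDerivAt_const (1 : ℝ) p).sub hu).sub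
      ((hasFDerivAt_fst (𝕜 := ℝ) (p := p)).mul_const (1 / 2 : ℝ))).log
      (by simp only [Pi.sub_apply]; intro h; linarith)
    have hL2 := ((hasFDerivAt_const (1 : ℝ) p).sub (hu.const_mul 2)).log
      (by simp only [Pi.sub_apply]; exact hy.ne')
    have hF := hAu.mul (hL1.sub hL2)
    have hz : HasFDerivAt (fun q : ℝ × ℝ => q.2) (ContinuousLinearMap.snd ℝ ℝ ℝ) p :=
      hasFDerivAt_snd
    have hF' := hF.congr_of_eventuallyEq (f₁ := fun q : ℝ × ℝ => q.2) (by
      filter_upwards [hD.mem_nhds hp] with q hq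
      have hq1 := hux q hq
      have hq2 := huhalf q hq
      have e := heq q hq
      rw [Real.log_div hq1.ne' (by linarith)] at e
      simp only [Pi.mul_apply, Pi.sub_apply, Function.comp]
      rw [mul_one_div]
      exact e)
    have hU := hz.unique hF'
    have e1 := congrArg (fun f => f ((1, 0) : ℝ × ℝ)) hU
    have e2 := congrArg (fun f => f ((0, 1) : ℝ × ℝ)) hU
    simp only [Function.comp, Pi.sub_apply, ContinuousLinearMap.coe_snd', ContinuousLinearMap.add_apply,
      ContinuousLinearMap.sub_apply, ContinuousLinearMap.smul_apply, smul_eq_mul,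
      ContinuousLinearMap.zero_apply, ContinuousLinearMap.coe_fst', mul_one_div] at e1 e2
    generalize deriv (fun t : ℝ => 2 * (1 - t ^ K) / (K * t ^ (K - 1))) (u p) = A' at e1 e2
    generalize Real.log (1 - u p - p.1 / 2) - Real.log (1 - 2 * u p) = L at e1 e2
    generalize fderiv ℝ u p (1, 0) = a at *
    generalize fderiv ℝ u p (0, 1) = b at *
    rw [show 1 - p.1 / 2 - u p = 1 - u p - p.1 / 2 by ring]
    generalize (K : ℝ) * u p ^ (K - 1) = Q at *
    generalize 1 - u p ^ K = P at *
    generalize 1 - u p - p.1 / 2 = w at *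
    generalize 1 - 2 * u p = y at *
    clear hU hF' hz hF hL1 hL2 hAu hA hu
    obtain ⟨C, hC⟩ : ∃ C, C = 2 * P / Q * (-w⁻¹ + 2 * y⁻¹) + L * A' := ⟨_, rfl⟩
    have f1 : C * a = P / (Q * w) := by
      have : P / (Q * w) = P / Q * w⁻¹ := by field_simp
      rw [this, hC]; linear_combination -e1
    have f2 : C * b = 1 := by
      rw [hC]; linear_combination -e2
    have hC0 : C ≠ 0 := by rintro h; simp [h] at f2
    apply mul_left_cancel₀ hC0
    have : C * (w * (Q / P) * a - b) = w * (Q / P) * (C * a) - C * b := by ring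
    rw [this, f1, f2]
    field_simp
    ring
  · intro p hp hz
    have h0 := hu0 p hp
    have h1 := huhalf p hp
    have hw := hux p hp
    have hP := hpow p hp
    have hy : 0 < 1 - 2 * u p := by linarith
    have e := heq p hp
    rw [hz] at e
    have hA : 2 * (1 - u p ^ K) / (K * u p ^ (K - 1)) ≠ 0 := by positivity
    have hl := (mul_eq_zero.mp e.symm).resolve_left hA
    have := Real.eq_one_of_pos_of_log_eq_zero (div_pos hw hy) hl
    rw [div_eq_one_iff_eq hy.ne'] at this
    linarith
end
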